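/- Let ℓ ≥ 2, let A be an essential hyperplane arrangement in K^ℓ, let H ∈ A, and suppose A' = A \ {H} is also essential. If |A| − |A^H| > r(A), then r(A) = r(A'); likewise, if |A'| − |A^H| > r(A'), then r(A) = r(A'). -/

import Mathlib

open Classical MvPolynomial

variable {K : Type*} [Field K] [CharZero K] {ℓ : ℕ}

/-- A (central) hyperplane arrangement: a finite set of nonzero linear forms,
pairwise non-proportional. -/
def IsArrangement (A : Finset (MvPolynomial (Fin ℓ) K)) : Prop :=
  (∀ α ∈ A, α ≠ 0 ∧ α.IsHomogeneous 1) ∧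
    ∀ α ∈ A, ∀ β ∈ A, α ≠ β → ∀ c : K, α ≠ c • β

/-- The arrangement is essential: the common zero set of its forms is `{0}`. -/
def IsEssential (A : Finset (MvPolynomial (Fin ℓ) K)) : Prop :=
  ∀ v : Fin ℓ → K, (∀ α ∈ A, eval v α = 0) → v = 0

/-- The defining polynomial `Q(A)`. -/
noncomputable def Qpoly (A : Finset (MvPolynomial (Fin ℓ) K)) : MvPolynomial (Fin ℓ) K :=
  ∏ α ∈ A, α

/-- Apply a derivation `θ = Σ θ_j ∂_j` to a polynomial. -/
noncomputable def applyDer (θ : Fin ℓ → MvPolynomial (Fin ℓ) K)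
    (f : MvPolynomial (Fin ℓ) K) : MvPolynomial (Fin ℓ) K :=
  ∑ j, θ j * pderiv j f

/-- The minimal degree of a Jacobian relation `r(A)`. -/
noncomputable def mdr (A : Finset (MvPolynomial (Fin ℓ) K)) : ℕ :=
  sInf {r | ∃ θ : Fin ℓ → MvPolynomial (Fin ℓ) K, θ ≠ 0 ∧
    (∀ j, (θ j).IsHomogeneous r) ∧ applyDer θ (Qpoly A) = 0}

/-- The number of elements `|A^H|` of the restriction of `A` to `H`:
the number of distinct subspaces `H ∩ ker α_L`, `L ∈ A \ {H}`. -/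
noncomputable def restCard (A : Finset (MvPolynomial (Fin ℓ) K))
    (H : MvPolynomial (Fin ℓ) K) : ℕ :=
  ((A.erase H).image fun L => {v : Fin ℓ → K | eval v H = 0 ∧ eval v L = 0}).card


theorem aux_lin {L : MvPolynomial (Fin ℓ) K} (h : L.IsHomogeneous 1) :
    ∃ a : Fin ℓ → K, L = ∑ i, C (a i) * X i := by
  have h1 : L ∈ homogeneousSubmodule (Fin ℓ) K 1 := h
  rw [homogeneousSubmodule_one_eq_span_X, Submodule.mem_span_range_iff_exists_fun] at h1
  obtain ⟨c, hc⟩ := h1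
  exact ⟨c, by rw [← hc]; simp [smul_eq_C_mul]⟩

theorem aux_prop {L M : MvPolynomial (Fin ℓ) K} (hL : L.IsHomogeneous 1)
    (hM : M.IsHomogeneous 1) (hL0 : L ≠ 0)
    (h : ∀ v, eval v L = 0 → eval v M = 0) : ∃ c : K, M = C c * L := by
  obtain ⟨a, ha⟩ := aux_lin hL
  obtain ⟨b, hb⟩ := aux_lin hM
  have : ∃ j, a j ≠ 0 := by
    by_contra hcon
    push Not at hcon
    apply hL0
    rw [ha]
    simp [hcon]
  obtain ⟨j, hj⟩ := this
  refine ⟨b j / a j, ?_⟩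
  have key : ∀ i, b i * a j = a i * b j := by
    intro i
    have := h (fun k => (if k = i then a j else 0) - (if k = j then a i else 0))
      (by rw [ha]; simp [mul_sub, Finset.sum_sub_distrib]; ring)
    rw [hb] at this
    simp [mul_sub, Finset.sum_sub_distrib] at this
    linear_combination this
  rw [ha, hb, Finset.mul_sum]
  refine Finset.sum_congr rfl fun i _ => ?_
  rw [← mul_assoc, ← C_mul]
  congr 2
  field_simp
  linear_combination key i

theorem aux_dvd {L M : MvPolynomial (Fin ℓ) K} (hL : L.IsHomogeneous 1)
    (hM : M.IsHomogeneous 1) (hL0 : L ≠ 0) (h : L ∣ M) : ∃ c : K, M = C c * L := by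
  apply aux_prop hL hM hL0
  rintro v hv
  obtain ⟨q, rfl⟩ := h
  simp [hv]

theorem aux_irr {L : MvPolynomial (Fin ℓ) K} (hL : L.IsHomogeneous 1) (hL0 : L ≠ 0) :
    Irreducible L := by
  apply irreducible_of_totalDegree_eq_one (hL.totalDegree hL0)
  intro x hx
  by_contra hcon
  have hx0 : x = 0 := by
    by_contra h0
    exact hcon (isUnit_iff_ne_zero.2 h0)
  apply hL0
  ext m
  have := hx m
  rw [hx0, zero_dvd_iff] at this
  simpa using this

theorem aux_relprime {L M : MvPolynomial (Fin ℓ) K} (hL : L.IsHomogeneous 1)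
    (hM : M.IsHomogeneous 1) (hL0 : L ≠ 0) (h : ∀ c : K, M ≠ C c * L) : IsRelPrime L M := by
  rw [(aux_irr hL hL0).isRelPrime_iff_not_dvd]
  intro hd
  obtain ⟨c, hc⟩ := aux_dvd hL hM hL0 hd
  exact h c hc

theorem aux_phi {H : MvPolynomial (Fin ℓ) K} (hH : H.IsHomogeneous 1) (hH0 : H ≠ 0) :
    ∃ φ : MvPolynomial (Fin ℓ) K →ₐ[K] MvPolynomial (Fin ℓ) K,
      φ H = 0 ∧ (∀ p, H ∣ p - φ p) ∧ (∀ p n, p.IsHomogeneous n → (φ p).IsHomogeneous n) ∧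
      (∀ L : MvPolynomial (Fin ℓ) K, L.IsHomogeneous 1 → ∃ e : K, φ L = L - C e * H) := by
  obtain ⟨a, ha⟩ := aux_lin hH
  have : ∃ j, a j ≠ 0 := by
    by_contra hcon
    push Not at hcon
    apply hH0
    rw [ha]
    simp [hcon]
  obtain ⟨i, hi⟩ := this
  let d : Fin ℓ → K := fun j => if j = i then 1 / a i else 0
  let φ : MvPolynomial (Fin ℓ) K →ₐ[K] MvPolynomial (Fin ℓ) K := aeval (fun j => X j - C (d j) * H)
  have hX : ∀ j, φ (X j) = X j - C (d j) * H := fun j => by simp [φ]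
  have hφ : ∀ b : Fin ℓ → K, φ (∑ j, C (b j) * X j) =
      (∑ j, C (b j) * X j) - C (∑ j, b j * d j) * H := by
    intro b
    have hC : ∀ c : K, φ (C c) = C c := fun c => by simp [φ]
    simp only [map_sum, map_mul, hX, hC, mul_sub, Finset.sum_sub_distrib, Finset.sum_mul, mul_assoc]
  refine ⟨φ, ?_, ?_, ?_, ?_⟩
  · have h1 := hφ a
    rw [← ha] at h1
    rw [h1]
    have : ∑ j, a j * d j = 1 := by simp [d, hi]
    rw [this]; simp
  · intro p
    induction p using MvPolynomial.induction_on with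
    | C c => simp [φ]
    | add p q hp hq =>
      have := dvd_add hp hq
      rw [map_add]
      convert this using 1; ring
    | mul_X p j hp =>
      rw [map_mul, hX]
      have h1 : p * X j - φ p * (X j - C (d j) * H) = (p - φ p) * X j + H * (φ p * C (d j)) := by
        ring
      rw [h1]
      exact dvd_add (hp.mul_right _) (dvd_mul_right _ _)
  · intro p n hp
    have := hp.aeval (fun j => X j - C (d j) * H) (n := 1)
      (fun j => (isHomogeneous_X K j).sub (hH.C_mul _))
    rw [one_mul] at this
    exact this
  · intro L hL
    obtain ⟨b, rfl⟩ := aux_lin hL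
    exact ⟨_, hφ b⟩

theorem applyDer_mul (θ : Fin ℓ → MvPolynomial (Fin ℓ) K) (f g : MvPolynomial (Fin ℓ) K) :
    applyDer θ (f * g) = applyDer θ f * g + f * applyDer θ g := by
  simp only [applyDer, Finset.sum_mul, Finset.mul_sum, ← Finset.sum_add_distrib]
  refine Finset.sum_congr rfl fun i _ => ?_
  simp only [Derivation.leibniz, smul_eq_mul]
  ring

theorem applyDer_add (θ : Fin ℓ → MvPolynomial (Fin ℓ) K) (f g : MvPolynomial (Fin ℓ) K) :
    applyDer θ (f + g) = applyDer θ f + applyDer θ g := by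
  simp only [applyDer, ← Finset.sum_add_distrib, map_add, mul_add]

theorem applyDer_C (θ : Fin ℓ → MvPolynomial (Fin ℓ) K) (c : K) :
    applyDer θ (C c) = 0 := by
  simp [applyDer]

theorem applyDer_lin_hom {θ : Fin ℓ → MvPolynomial (Fin ℓ) K} {r : ℕ}
    (hθ : ∀ j, (θ j).IsHomogeneous r) {L : MvPolynomial (Fin ℓ) K} (hL : L.IsHomogeneous 1) :
    (applyDer θ L).IsHomogeneous r := by
  apply IsHomogeneous.sum
  intro j _
  exact (hθ j).mul (hL.pderiv (i := j))

theorem aux_main {A : Finset (MvPolynomial (Fin ℓ) K)} (hA : IsArrangement A)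
    {H : MvPolynomial (Fin ℓ) K} (hH : H ∈ A) {θ : Fin ℓ → MvPolynomial (Fin ℓ) K} {r : ℕ}
    (hθ : ∀ j, (θ j).IsHomogeneous r) (hd : ∀ L ∈ A.erase H, L ∣ applyDer θ L)
    (hr : r < (A.erase H).card - restCard A H) : H ∣ applyDer θ H := by
  have hH1 := (hA.1 H hH).2
  have hH0 := (hA.1 H hH).1
  obtain ⟨φ, φH, φdvd, φhom, φlin⟩ := aux_phi hH1 hH0
  set f := applyDer θ H with hf
  have hfhom : f.IsHomogeneous r := applyDer_lin_hom hθ hH1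
  suffices h0 : φ f = 0 by
    have := φdvd f
    rwa [h0, sub_zero] at this
  let Z : MvPolynomial (Fin ℓ) K → Set (Fin ℓ → K) :=
    fun L => {v : Fin ℓ → K | eval v H = 0 ∧ eval v L = 0}
  let I := (A.erase H).image Z
  have hI : I.card = restCard A H := rfl
  have hlin : ∀ L ∈ A.erase H, L.IsHomogeneous 1 ∧ L ≠ 0 := fun L hL =>
    ⟨(hA.1 L (Finset.mem_of_mem_erase hL)).2, (hA.1 L (Finset.mem_of_mem_erase hL)).1⟩
  have hφ0 : ∀ L ∈ A.erase H, φ L ≠ 0 := by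
    intro L hL h0
    obtain ⟨e, he⟩ := φlin L (hlin L hL).1
    rw [h0] at he
    apply hA.2 L (Finset.mem_of_mem_erase hL) H hH (Finset.ne_of_mem_erase hL) e
    rw [smul_eq_C_mul]
    linear_combination -he
  have hev : ∀ (v : Fin ℓ → K) (p : MvPolynomial (Fin ℓ) K),
      eval v (φ p) = eval (fun j => eval v (φ (X j))) p := by
    intro v p
    induction p using MvPolynomial.induction_on with
    | C c =>
      have : φ (C c) = C c := by
        rw [← algebraMap_eq]; exact φ.commutes c
      simp [this]
    | add p q hp hq => simp [hp, hq]
    | mul_X p j hp => simp [hp]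
  have hprop : ∀ L ∈ A.erase H, ∀ M ∈ A.erase H, Z L = Z M → ∃ c : K, φ L = C c * φ M := by
    intro L hL M hM hZ
    apply aux_prop (φhom _ _ (hlin M hM).1) (φhom _ _ (hlin L hL).1) (hφ0 M hM)
    intro v hv
    rw [hev] at hv ⊢
    have h1 : (fun j => eval v (φ (X j))) ∈ Z M := ⟨by rw [← hev, φH, map_zero], hv⟩
    rw [← hZ] at h1
    exact h1.2
  have hpropZ : ∀ L ∈ A.erase H, ∀ M ∈ A.erase H, ∀ c : K, φ L = C c * φ M → Z M ⊆ Z L := by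
    intro L hL M hM c hc v hv
    obtain ⟨e, he⟩ := φlin L (hlin L hL).1
    obtain ⟨e', he'⟩ := φlin M (hlin M hM).1
    refine ⟨hv.1, ?_⟩
    have h1 : L = C c * M + C (e - c * e') * H := by
      simp only [map_sub, map_mul]
      rw [he, he'] at hc
      linear_combination hc
    rw [h1]
    simp [hv.1, hv.2]
  have hrep : ∀ x ∈ I, ∃ L ∈ A.erase H, Z L = x := by
    intro x hx
    simpa [I] using hx
  choose! rep hrep1 hrep2 using hrep
  let F : Set (Fin ℓ → K) → Finset (MvPolynomial (Fin ℓ) K) :=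
    fun x => (A.erase H).filter (fun L => Z L = x)
  have hcard : (A.erase H).card = ∑ x ∈ I, (F x).card :=
    Finset.card_eq_sum_card_image Z (A.erase H)
  have hFpos : ∀ x ∈ I, 1 ≤ (F x).card := by
    intro x hx
    exact Finset.card_pos.2 ⟨rep x, Finset.mem_filter.2 ⟨hrep1 x hx, hrep2 x hx⟩⟩
  have hsum : ∑ x ∈ I, ((F x).card - 1) = (A.erase H).card - restCard A H := by
    rw [hcard, ← hI, Finset.card_eq_sum_ones, Finset.sum_tsub_distrib _ hFpos]
  have hone : ∀ x ∈ I, φ (rep x) ^ ((F x).card - 1) ∣ φ f := by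
    intro x hx
    set M := rep x with hM
    have hMA := hrep1 x hx
    have hd1 : ∀ L ∈ F x, L ∣ M * f - H * applyDer θ M := by
      intro L hL
      obtain ⟨hL1, hL2⟩ := Finset.mem_filter.1 hL
      obtain ⟨c, hc⟩ := hprop L hL1 M hMA (hL2.trans (hrep2 x hx).symm)
      have hc0 : c ≠ 0 := by
        rintro rfl
        apply hφ0 L hL1
        rw [hc]; simp
      obtain ⟨e, he⟩ := φlin L (hlin L hL1).1
      obtain ⟨e', he'⟩ := φlin M (hlin M hMA).1
      have h1 : L = C c * M + C (e - c * e') * H := by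
        simp only [map_sub, map_mul]
        rw [he, he'] at hc
        linear_combination hc
      generalize e - c * e' = g at h1
      have h2 : applyDer θ L = C c * applyDer θ M + C g * f := by
        rw [h1, applyDer_add, applyDer_mul, applyDer_mul, applyDer_C, applyDer_C]
        ring
      have h3 : M * f - H * applyDer θ M = C c⁻¹ * (L * f - H * applyDer θ L) := by
        have : C c⁻¹ * C c = (1 : MvPolynomial (Fin ℓ) K) := by
          rw [← C_mul, inv_mul_cancel₀ hc0, C_1]
        rw [h2, h1]
        linear_combination -(M * f - H * applyDer θ M) * this
      rw [h3]
      exact (dvd_sub (dvd_mul_right _ _) ((hd L hL1).mul_left _)).mul_left _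
    have hprod : ∏ L ∈ F x, L ∣ M * f - H * applyDer θ M := by
      apply Finset.prod_dvd_of_isRelPrime _ hd1
      intro L hL L' hL' hne
      have hL1 := (Finset.mem_filter.1 hL).1
      have hL1' := (Finset.mem_filter.1 hL').1
      apply aux_relprime (hlin L hL1).1 (hlin L' hL1').1 (hlin L hL1).2
      intro c
      rw [← smul_eq_C_mul]
      exact hA.2 _ (Finset.mem_of_mem_erase hL1') _ (Finset.mem_of_mem_erase hL1) hne.symm c
    have h4 := map_dvd φ hprod
    rw [map_prod, map_sub, map_mul, map_mul, φH, zero_mul, sub_zero] at h4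
    have h5 : φ M ^ (F x).card ∣ ∏ L ∈ F x, φ L := by
      rw [← Finset.prod_const]
      apply Finset.prod_dvd_prod_of_dvd
      intro L hL
      obtain ⟨hL1, hL2⟩ := Finset.mem_filter.1 hL
      obtain ⟨c, hc⟩ := hprop L hL1 M hMA (hL2.trans (hrep2 x hx).symm)
      rw [hc]
      exact dvd_mul_left _ _
    have h6 := h5.trans h4
    obtain ⟨k, hk⟩ := Nat.exists_eq_add_of_le' (hFpos x hx)
    rw [hk, pow_succ'] at h6
    rw [hk, Nat.add_sub_cancel]
    exact (mul_dvd_mul_iff_left (hφ0 M hMA)).1 h6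
  have hall : ∏ x ∈ I, φ (rep x) ^ ((F x).card - 1) ∣ φ f := by
    apply Finset.prod_dvd_of_isRelPrime _ hone
    intro x hx y hy hne
    have hx1 := hrep1 x hx
    have hy1 := hrep1 y hy
    apply IsRelPrime.pow
    apply aux_relprime (φhom _ _ (hlin _ hx1).1) (φhom _ _ (hlin _ hy1).1) (hφ0 _ hx1)
    intro c hc
    have hc0 : c ≠ 0 := by
      rintro rfl
      apply hφ0 _ hy1
      rw [hc]; simp
    have hc' : φ (rep x) = C c⁻¹ * φ (rep y) := by
      rw [hc, ← mul_assoc, ← C_mul, inv_mul_cancel₀ hc0, C_1, one_mul]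
    apply hne
    have := Set.Subset.antisymm (hpropZ _ hx1 _ hy1 _ hc') (hpropZ _ hy1 _ hx1 _ hc)
    rw [hrep2 x hx, hrep2 y hy] at this
    exact this.symm
  by_contra hne
  obtain ⟨q, hq⟩ := hall
  have hP : (∏ x ∈ I, φ (rep x) ^ ((F x).card - 1)).IsHomogeneous
      (∑ x ∈ I, ((F x).card - 1)) := by
    apply IsHomogeneous.prod
    intro x hx
    have := (φhom _ _ (hlin _ (hrep1 x hx)).1).pow ((F x).card - 1)
    rwa [one_mul] at this
  have hP0 : (∏ x ∈ I, φ (rep x) ^ ((F x).card - 1)) ≠ 0 := by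
    intro h; rw [h, zero_mul] at hq; exact hne hq
  have hq0 : q ≠ 0 := by
    intro h; rw [h, mul_zero] at hq; exact hne hq
  have h1 := (φhom _ _ hfhom).totalDegree hne
  rw [hq, totalDegree_mul_of_isDomain hP0 hq0, hP.totalDegree hP0, hsum] at h1
  omega

/-- The set of degrees of Jacobian relations. -/
def mdrSet (A : Finset (MvPolynomial (Fin ℓ) K)) : Set ℕ :=
  {r | ∃ θ : Fin ℓ → MvPolynomial (Fin ℓ) K, θ ≠ 0 ∧
    (∀ j, (θ j).IsHomogeneous r) ∧ applyDer θ (Qpoly A) = 0}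

theorem aux_Qhom {A : Finset (MvPolynomial (Fin ℓ) K)} (hA : IsArrangement A) :
    (Qpoly A).IsHomogeneous A.card := by
  have := IsHomogeneous.prod A (fun α => α) (fun _ => 1) (fun α hα => (hA.1 α hα).2)
  simpa [Qpoly] using this

theorem aux_Q0 {A : Finset (MvPolynomial (Fin ℓ) K)} (hA : IsArrangement A) :
    Qpoly A ≠ 0 := Finset.prod_ne_zero_iff.2 fun α hα => (hA.1 α hα).1

theorem aux_euler {A : Finset (MvPolynomial (Fin ℓ) K)} (hA : IsArrangement A) :
    applyDer X (Qpoly A) = A.card • Qpoly A := (aux_Qhom hA).sum_X_mul_pderiv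

theorem aux_divisor {A : Finset (MvPolynomial (Fin ℓ) K)} (hA : IsArrangement A)
    {θ : Fin ℓ → MvPolynomial (Fin ℓ) K} (h : applyDer θ (Qpoly A) = 0) :
    ∀ α ∈ A, α ∣ applyDer θ α := by
  intro α hα
  have h1 : Qpoly A = α * ∏ β ∈ A.erase α, β := (Finset.mul_prod_erase A _ hα).symm
  rw [h1, applyDer_mul] at h
  have h2 : α ∣ applyDer θ α * ∏ β ∈ A.erase α, β :=
    ⟨-applyDer θ (∏ β ∈ A.erase α, β), by linear_combination h⟩
  refine IsRelPrime.dvd_of_dvd_mul_right ?_ h2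
  apply IsRelPrime.prod_right
  intro β hβ
  have hβA := Finset.mem_of_mem_erase hβ
  apply aux_relprime (hA.1 α hα).2 (hA.1 β hβA).2 (hA.1 α hα).1
  intro c
  rw [← smul_eq_C_mul]
  exact hA.2 _ hβA _ hα (Finset.ne_of_mem_erase hβ) c

theorem aux_hom {α p : MvPolynomial (Fin ℓ) K} {r : ℕ} (hα : α.IsHomogeneous 1) (h0 : α ≠ 0)
    (h : (α * p).IsHomogeneous r) (j : Fin ℓ) : (p * X j).IsHomogeneous r := by
  by_cases hp : p = 0
  · rw [hp, zero_mul]; exact isHomogeneous_zero _ _ _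
  have hdeg := h.totalDegree (mul_ne_zero h0 hp)
  rw [totalDegree_mul_of_isDomain h0 hp, hα.totalDegree h0] at hdeg
  obtain ⟨s, rfl⟩ : ∃ s, r = s + 1 := ⟨p.totalDegree, by omega⟩
  refine IsHomogeneous.mul ?_ (isHomogeneous_X K j)
  have hsum := sum_homogeneousComponent p
  have key : α * p = α * homogeneousComponent s p := by
    have h1 := homogeneousComponent_eq_self h
    rw [← h1]
    conv_lhs => rw [← hsum]
    rw [Finset.mul_sum, map_sum]
    rw [Finset.sum_eq_single s]
    · exact homogeneousComponent_eq_self (by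
        rw [add_comm]; exact hα.mul (homogeneousComponent_isHomogeneous s p))
    · intro b _ hb
      have h2 : (α * homogeneousComponent b p) ∈ homogeneousSubmodule (Fin ℓ) K (1 + b) :=
        hα.mul (homogeneousComponent_isHomogeneous b p)
      rw [homogeneousComponent_of_mem h2, if_neg (by omega)]
    · intro hs
      exfalso; apply hs; rw [Finset.mem_range]; omega
  rw [mul_left_cancel₀ h0 key]
  exact homogeneousComponent_isHomogeneous s p

theorem aux_der_prod {θ : Fin ℓ → MvPolynomial (Fin ℓ) K}
    {p : MvPolynomial (Fin ℓ) K → MvPolynomial (Fin ℓ) K} (A : Finset (MvPolynomial (Fin ℓ) K))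
    (h : ∀ α ∈ A, applyDer θ α = α * p α) :
    applyDer θ (∏ α ∈ A, α) = (∑ α ∈ A, p α) * ∏ α ∈ A, α := by
  induction A using Finset.induction_on with
  | empty => simp [applyDer]
  | insert a s ha ih =>
    rw [Finset.prod_insert ha, Finset.sum_insert ha, applyDer_mul,
      ih fun α hα => h α (Finset.mem_insert_of_mem hα), h a (Finset.mem_insert_self _ _)]
    ring

theorem aux_mem {A : Finset (MvPolynomial (Fin ℓ) K)} (hA : IsArrangement A) (hne : A.Nonempty)
    {θ : Fin ℓ → MvPolynomial (Fin ℓ) K} {r : ℕ}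
    (hθ : ∀ j, (θ j).IsHomogeneous r) (hd : ∀ L ∈ A, L ∣ applyDer θ L)
    (hE : ∀ p : MvPolynomial (Fin ℓ) K, ∃ j, θ j ≠ p * X j) : r ∈ mdrSet A := by
  have hd' : ∀ L, ∃ p, L ∈ A → applyDer θ L = L * p := by
    intro L
    by_cases hL : L ∈ A
    · obtain ⟨p, hp⟩ := hd L hL
      exact ⟨p, fun _ => hp⟩
    · exact ⟨0, fun h => absurd h hL⟩
  choose p hp using hd'
  have hn : (A.card : K) ≠ 0 := Nat.cast_ne_zero.2 (Finset.card_pos.2 hne).ne'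
  let P := C (A.card : K)⁻¹ * ∑ α ∈ A, p α
  have hder := aux_der_prod A hp
  refine ⟨fun j => θ j - P * X j, ?_, ?_, ?_⟩
  · intro h0
    obtain ⟨j, hj⟩ := hE P
    apply hj
    have := congrFun h0 j
    exact sub_eq_zero.1 this
  · intro j
    refine (hθ j).sub ?_
    simp only [P]
    rw [mul_assoc]
    refine IsHomogeneous.C_mul ?_ _
    rw [Finset.sum_mul]
    apply IsHomogeneous.sum
    intro α hα
    apply aux_hom (hA.1 α hα).2 (hA.1 α hα).1
    rw [← hp α hα]
    exact applyDer_lin_hom hθ (hA.1 α hα).2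
  · have h1 : applyDer (fun j => θ j - P * X j) (Qpoly A) =
        applyDer θ (Qpoly A) - P * applyDer X (Qpoly A) := by
      simp only [applyDer, Finset.mul_sum, ← Finset.sum_sub_distrib]
      refine Finset.sum_congr rfl fun i _ => ?_
      ring
    rw [h1, aux_euler hA]
    have h2 : applyDer θ (Qpoly A) = (∑ α ∈ A, p α) * Qpoly A := hder
    rw [h2]
    have h3 : C (A.card : K)⁻¹ * (A.card : MvPolynomial (Fin ℓ) K) = 1 := by
      rw [← map_natCast (C : K →+* MvPolynomial (Fin ℓ) K), ← C_mul, inv_mul_cancel₀ hn, C_1]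
    simp only [P, nsmul_eq_mul]
    linear_combination -(∑ α ∈ A, p α) * Qpoly A * h3

theorem aux_notE {A : Finset (MvPolynomial (Fin ℓ) K)} (hA : IsArrangement A) (hne : A.Nonempty)
    {θ : Fin ℓ → MvPolynomial (Fin ℓ) K} (h0 : θ ≠ 0) (h : applyDer θ (Qpoly A) = 0)
    (p : MvPolynomial (Fin ℓ) K) : ∃ j, θ j ≠ p * X j := by
  by_contra hcon
  push Not at hcon
  have h1 : applyDer θ (Qpoly A) = p * applyDer X (Qpoly A) := by
    simp only [applyDer, Finset.mul_sum, hcon, mul_assoc]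
  rw [h, aux_euler hA, nsmul_eq_mul] at h1
  have hn : (A.card : MvPolynomial (Fin ℓ) K) ≠ 0 :=
    Nat.cast_ne_zero.2 (Finset.card_pos.2 hne).ne'
  have hp : p = 0 := by
    rcases mul_eq_zero.1 h1.symm with h2 | h2
    · exact h2
    · exact absurd h2 (mul_ne_zero hn (aux_Q0 hA))
  apply h0
  funext j
  rw [hcon j, hp, zero_mul]; rfl

theorem aux_nonempty (hl : 2 ≤ ℓ) {A : Finset (MvPolynomial (Fin ℓ) K)} (hA : IsArrangement A) :
    (mdrSet A).Nonempty := by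
  let i : Fin ℓ := ⟨0, by omega⟩
  let k : Fin ℓ := ⟨1, by omega⟩
  have hik : i ≠ k := by simp [i, k]
  by_cases hz : pderiv i (Qpoly A) = 0
  · refine ⟨0, fun j => if j = i then 1 else 0, ?_, ?_, ?_⟩
    · intro h
      have := congrFun h i
      simp at this
    · intro j
      dsimp only
      split_ifs
      · exact isHomogeneous_one _ _
      · exact isHomogeneous_zero _ _ _
    · simp [applyDer, hz]
  · refine ⟨A.card - 1, fun j => (if j = i then pderiv k (Qpoly A) else 0) -
      (if j = k then pderiv i (Qpoly A) else 0), ?_, ?_, ?_⟩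
    · intro h
      have := congrFun h k
      simp [hik.symm, hz] at this
    · intro j
      refine IsHomogeneous.sub ?_ ?_
      · split_ifs
        · exact (aux_Qhom hA).pderiv
        · exact isHomogeneous_zero _ _ _
      · split_ifs
        · exact (aux_Qhom hA).pderiv
        · exact isHomogeneous_zero _ _ _
    · simp [applyDer, sub_mul, Finset.sum_sub_distrib]
      ring

/-- Let `ℓ ≥ 2`, let `A` be an essential hyperplane arrangement in `K^ℓ`,
let `H ∈ A`, and suppose `A' = A \ {H}` is also essential.
If `|A| − |A^H| > r(A)`, then `r(A) = r(A')`; likewise,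
if `|A'| − |A^H| > r(A')`, then `r(A) = r(A')`. -/
theorem mdr_deletion_criterion (hl : 2 ≤ ℓ) (A : Finset (MvPolynomial (Fin ℓ) K))
    (hA : IsArrangement A) (hAess : IsEssential A)
    (H : MvPolynomial (Fin ℓ) K) (hH : H ∈ A)
    (hA'ess : IsEssential (A.erase H)) :
    (mdr A < A.card - restCard A H → mdr A = mdr (A.erase H)) ∧
    (mdr (A.erase H) < (A.erase H).card - restCard A H →
      mdr A = mdr (A.erase H)) := by
  have hA' : IsArrangement (A.erase H) :=
    ⟨fun α hα => hA.1 α (Finset.mem_of_mem_erase hα), fun α hα β hβ =>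
      hA.2 α (Finset.mem_of_mem_erase hα) β (Finset.mem_of_mem_erase hβ)⟩
  have hne' : (A.erase H).Nonempty := by
    by_contra hcon
    rw [Finset.not_nonempty_iff_eq_empty] at hcon
    have := hA'ess (fun _ => 1) (by rw [hcon]; simp)
    have := congrFun this ⟨0, by omega⟩
    simp at this
  have hne : A.Nonempty := ⟨H, hH⟩
  have hmA : mdr A = sInf (mdrSet A) := rfl
  have hmA' : mdr (A.erase H) = sInf (mdrSet (A.erase H)) := rfl
  have hsub : mdrSet A ⊆ mdrSet (A.erase H) := by
    rintro r ⟨θ, h0, hhom, hQ⟩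
    exact aux_mem hA' hne' hhom
      (fun L hL => aux_divisor hA hQ L (Finset.mem_of_mem_erase hL)) (aux_notE hA hne h0 hQ)
  have hnon := aux_nonempty hl hA
  have hmem : mdr A ∈ mdrSet A := Nat.sInf_mem hnon
  have hmem' : mdr (A.erase H) ∈ mdrSet (A.erase H) := Nat.sInf_mem (hnon.mono hsub)
  have hle : mdr (A.erase H) ≤ mdr A := Nat.sInf_le (hsub hmem)
  have hsecond : mdr (A.erase H) < (A.erase H).card - restCard A H →
      mdr A = mdr (A.erase H) := by
    intro hlt
    refine le_antisymm (Nat.sInf_le ?_) hle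
    change mdr (A.erase H) ∈ mdrSet A
    obtain ⟨θ, h0, hhom, hQ⟩ := hmem'
    have hdiv := aux_divisor hA' hQ
    refine aux_mem hA hne hhom ?_ (aux_notE hA' hne' h0 hQ)
    intro L hL
    by_cases hLH : L = H
    · rw [hLH]
      exact aux_main hA hH hhom hdiv hlt
    · exact hdiv L (Finset.mem_erase.2 ⟨hLH, hL⟩)
  refine ⟨fun hlt => ?_, hsecond⟩
  by_contra hcon
  have hc := Finset.card_erase_of_mem hH
  exact hcon (hsecond (by omega))
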